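/- Let n, M ≥ 1 be integers and let θ be an n×n matrix with nonnegative real entries such that ∏_{i} θ(i,σ(i)) > 0 for at least one permutation σ ∈ S_n. Then (M^M/M!)^n · (n!/n^n)^{M−1} · perm(θ ⊗ U_{M,M}) ≤ perm(θ)^M ≤ (M^M/M!)^n · perm(θ ⊗ U_{M,M}); equivalently, the degree-M scaled Sinkhorn permanent perm_{scS,M}(θ) = perm(θ ⊗ U_{M,M})^{1/M} satisfies (M^n/(M!)^{n/M}) · (n!/n^n)^{(M−1)/M} ≤ perm(θ)/perm_{scS,M}(θ) ≤ M^n/(M!)^{n/M}. -/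

import Mathlib

open scoped BigOperators

noncomputable section

/-- The permanent of a real square matrix: `perm(A) = Σ_{σ} ∏_i A(i, σ(i))`. -/
def perm' {α : Type*} [Fintype α] [DecidableEq α] (A : Matrix α α ℝ) : ℝ :=
  ∑ σ : Equiv.Perm α, ∏ i, A i (σ i)

/-- Expansion of a real quadratic form in an eigenbasis. -/
theorem Matrix.IsHermitian.dotProduct_mulVec_eq_sum {ι : Type*} [Fintype ι] [DecidableEq ι]
    {C : Matrix ι ι ℝ} (hC : C.IsHermitian) (z : ι → ℝ) :
    z ⬝ᵥ C.mulVec z = ∑ k, hC.eigenvalues k * ((hC.eigenvectorBasis k).ofLp ⬝ᵥ z) ^ 2 := by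
  have h1 (w : ι → ℝ) : z ⬝ᵥ w = ∑ k, ((hC.eigenvectorBasis k).ofLp ⬝ᵥ z) *
      ((hC.eigenvectorBasis k).ofLp ⬝ᵥ w) := by
    have := hC.eigenvectorBasis.sum_inner_mul_inner (WithLp.toLp 2 z) (WithLp.toLp 2 w)
    simp only [EuclideanSpace.inner_eq_star_dotProduct, star_trivial] at this
    rw [dotProduct_comm z w, ← this]
    exact Finset.sum_congr rfl fun k _ => by rw [dotProduct_comm w]
  have hsymm : C.transpose = C := by simpa [Matrix.IsHermitian] using hC
  rw [h1]
  refine Finset.sum_congr rfl fun k _ => ?_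
  rw [Matrix.dotProduct_mulVec, ← Matrix.mulVec_transpose, hsymm, hC.mulVec_eigenvectorBasis,
    smul_dotProduct, smul_eq_mul]
  ring

/-- A vector `y` satisfying `By = lam • p • y` with `lam ≥ 1`, where `Ba = p • a` for a positive
vector `a`, is proportional to `a`. -/
theorem eigenvector_proportional {ι : Type*} [Fintype ι]
    {B : Matrix ι ι ℝ} (hB : ∀ i j, B i j = B j i) (hpos : ∀ i j, i ≠ j → 0 < B i j)
    (hdiag : ∀ i, 0 ≤ B i i) {a p y : ι → ℝ} (ha : ∀ i, 0 < a i) (hp : ∀ i, 0 < p i)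
    (hBa : ∀ i, ∑ j, B i j * a j = p i * a i) {lam : ℝ} (hlam : 1 ≤ lam)
    (hBy : ∀ i, ∑ j, B i j * y j = lam * p i * y i) (i j : ι) : y i * a j = y j * a i := by
  have hnn : ∀ i j, 0 ≤ B i j * a i * a j * (y i / a i - y j / a j) ^ 2 := fun i j => by
    have : 0 ≤ B i j := by
      rcases eq_or_ne i j with rfl | h
      · exact hdiag i
      · exact (hpos i j h).le
    have := ha i
    have := ha j
    positivity
  have hsplit : ∀ i j, B i j * a i * a j * (y i / a i - y j / a j) ^ 2 =
      (y i ^ 2 / a i) * (B i j * a j) + (y j ^ 2 / a j) * (B j i * a i)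
        - 2 * (y i * (B i j * y j)) := fun i j => by
    have h1 := (ha i).ne'
    have h2 := (ha j).ne'
    rw [hB j i]
    field_simp
    ring
  have hsum : ∑ i, ∑ j, B i j * a i * a j * (y i / a i - y j / a j) ^ 2 =
      2 * (1 - lam) * ∑ i, p i * y i ^ 2 := by
    have e1 : ∑ i, ∑ j, (y i ^ 2 / a i) * (B i j * a j) = ∑ i, p i * y i ^ 2 := by
      refine Finset.sum_congr rfl fun i _ => ?_
      rw [← Finset.mul_sum, hBa]
      have := (ha i).ne'
      field_simp
    have e2 : ∑ i, ∑ j, (y j ^ 2 / a j) * (B j i * a i) = ∑ i, p i * y i ^ 2 := by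
      rw [Finset.sum_comm, e1]
    have e3 : ∑ i, ∑ j, 2 * (y i * (B i j * y j)) = 2 * lam * ∑ i, p i * y i ^ 2 := by
      rw [Finset.mul_sum]
      refine Finset.sum_congr rfl fun i _ => ?_
      rw [← Finset.mul_sum, ← Finset.mul_sum, hBy]
      ring
    simp only [hsplit, Finset.sum_sub_distrib, Finset.sum_add_distrib, e1, e2, e3]
    ring
  have hle : ∑ i, ∑ j, B i j * a i * a j * (y i / a i - y j / a j) ^ 2 ≤ 0 := by
    rw [hsum]
    have : 0 ≤ ∑ i, p i * y i ^ 2 :=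
      Finset.sum_nonneg fun i _ => mul_nonneg (hp i).le (sq_nonneg _)
    nlinarith
  rcases eq_or_ne i j with rfl | hij
  · rfl
  have hterm : B i j * a i * a j * (y i / a i - y j / a j) ^ 2 ≤ 0 :=
    calc _ ≤ ∑ j, B i j * a i * a j * (y i / a i - y j / a j) ^ 2 :=
          Finset.single_le_sum (f := fun j => B i j * a i * a j * (y i / a i - y j / a j) ^ 2)
            (fun j _ => hnn i j) (Finset.mem_univ j)
      _ ≤ _ := Finset.single_le_sum
          (f := fun i => ∑ j, B i j * a i * a j * (y i / a i - y j / a j) ^ 2)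
          (fun i _ => Finset.sum_nonneg fun j _ => hnn i j) (Finset.mem_univ i)
      _ ≤ 0 := hle
  have hc : 0 < B i j * a i * a j := mul_pos (mul_pos (hpos i j hij) (ha i)) (ha j)
  have hz : y i / a i - y j / a j = 0 := by
    by_contra hne
    have := mul_pos hc (sq_pos_of_ne_zero hne)
    linarith
  have h1 := (ha i).ne'
  have h2 := (ha j).ne'
  field_simp at hz
  linarith

/-- The criterion of Shenfeld and van Handel: a symmetric matrix with positive off-diagonal
entries whose square dominates it, relative to a positive vector `a`, is negative semidefinite
on the orthogonal complement of `Ba`. -/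
theorem dotProduct_mulVec_nonpos {ι : Type*} [Fintype ι] [DecidableEq ι]
    {B : Matrix ι ι ℝ} (hB : ∀ i j, B i j = B j i) (hpos : ∀ i j, i ≠ j → 0 < B i j)
    (hdiag : ∀ i, 0 ≤ B i i) {a : ι → ℝ} (ha : ∀ i, 0 < a i) (hr : ∀ i, 0 < B.mulVec a i)
    (h : ∀ y : ι → ℝ, y ⬝ᵥ B.mulVec y ≤ ∑ i, a i * (B.mulVec y i) ^ 2 / B.mulVec a i)
    {x : ι → ℝ} (hx : x ⬝ᵥ B.mulVec a = 0) : x ⬝ᵥ B.mulVec x ≤ 0 := by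
  obtain ⟨s, hs, hsp⟩ : ∃ s : ι → ℝ, (∀ i, 0 < s i) ∧ ∀ i, s i ^ 2 * a i = B.mulVec a i := by
    refine ⟨fun i => √(B.mulVec a i / a i), fun i => Real.sqrt_pos.2 (div_pos (hr i) (ha i)),
      fun i => ?_⟩
    rw [Real.sq_sqrt (div_pos (hr i) (ha i)).le, div_mul_cancel₀ _ (ha i).ne']
  set C : Matrix ι ι ℝ := Matrix.of fun i j => B i j / (s i * s j) with hCdef
  have hC : C.IsHermitian := by
    ext i j
    simp [hCdef, hB i j, mul_comm]
  have hCB : ∀ z : ι → ℝ, ∀ i, C.mulVec z i = B.mulVec (fun j => z j / s j) i / s i := by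
    intro z i
    simp only [Matrix.mulVec, dotProduct, hCdef, Matrix.of_apply, Finset.sum_div]
    refine Finset.sum_congr rfl fun j _ => ?_
    have h1 := (hs i).ne'
    have h2 := (hs j).ne'
    field_simp
  have hquad : x ⬝ᵥ B.mulVec x = (fun i => s i * x i) ⬝ᵥ C.mulVec (fun i => s i * x i) := by
    have : (fun j => s j * x j / s j) = x :=
      funext fun j => mul_div_cancel_left₀ _ (hs j).ne'
    simp only [dotProduct, hCB, this]
    refine Finset.sum_congr rfl fun i _ => ?_
    have h1 := (hs i).ne'
    field_simp
  rw [hquad, hC.dotProduct_mulVec_eq_sum]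
  refine Finset.sum_nonpos fun k _ => ?_
  set v := (hC.eigenvectorBasis k).ofLp with hv
  set lam := hC.eigenvalues k
  have hev : ∀ i, B.mulVec (fun j => v j / s j) i = lam * s i * v i := by
    intro i
    have h1 := congrFun (hC.mulVec_eigenvectorBasis k) i
    rw [hCB, div_eq_iff (hs i).ne'] at h1
    rw [h1]
    simp only [Pi.smul_apply, smul_eq_mul]
    ring
  have hnorm : ∑ i, v i ^ 2 = 1 := by
    have := EuclideanSpace.real_norm_sq_eq (hC.eigenvectorBasis k)
    rw [← this, hC.eigenvectorBasis.orthonormal.1 k, one_pow]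
  have hle : lam ≤ lam ^ 2 := by
    have h1 := h fun j => v j / s j
    have e1 : (fun j => v j / s j) ⬝ᵥ B.mulVec (fun j => v j / s j) = lam * ∑ i, v i ^ 2 := by
      simp only [dotProduct, hev, Finset.mul_sum]
      refine Finset.sum_congr rfl fun i _ => ?_
      have := (hs i).ne'
      field_simp
    have e2 : ∑ i, a i * (B.mulVec (fun j => v j / s j) i) ^ 2 / B.mulVec a i =
        lam ^ 2 * ∑ i, v i ^ 2 := by
      simp only [hev, ← hsp, Finset.mul_sum]
      refine Finset.sum_congr rfl fun i _ => ?_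
      have h1 := (hs i).ne'
      have h2 := (ha i).ne'
      field_simp
    rwa [e1, e2, hnorm, mul_one, mul_one] at h1
  rcases le_or_gt lam 0 with hneg | hlpos
  · exact mul_nonpos_of_nonpos_of_nonneg hneg (sq_nonneg _)
  have hlam : 1 ≤ lam := by nlinarith
  have hprop := eigenvector_proportional (y := fun j => v j / s j) (p := fun i => s i ^ 2)
    hB hpos hdiag ha (fun i => pow_pos (hs i) 2) (fun i => (hsp i).symm) hlam (fun i => by
      have := (hs i).ne'
      refine (hev i).trans ?_
      field_simp)
  have hzero : v ⬝ᵥ (fun i => s i * x i) = 0 := by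
    rcases isEmpty_or_nonempty ι with he | ⟨⟨j⟩⟩
    · simp [dotProduct]
    refine (mul_eq_zero.1 (?_ : a j * _ = 0)).resolve_left (ha j).ne'
    have : v j / s j * (x ⬝ᵥ B.mulVec a) = 0 := by rw [hx, mul_zero]
    rw [← this]
    simp only [dotProduct, Finset.mul_sum, ← hsp]
    refine Finset.sum_congr rfl fun i _ => ?_
    have h1 := hprop i j
    have h2 := (hs i).ne'
    have h3 : v i * a j = s i * (v j / s j * a i) := by
      simp only at h1
      rw [← h1]
      field_simp
    linear_combination (s i * x i) * h3
  rw [hzero]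
  simp

/-- The sum over injective assignments of elements of `S` to the vectors of a list of the products
of the corresponding entries; the permanent of the matrix with these columns if the list has
length `#S`. -/
def mixedPerm {ι : Type*} [DecidableEq ι] : List (ι → ℝ) → Finset ι → ℝ
  | [], _ => 1
  | v :: l, S => ∑ i ∈ S, v i * mixedPerm l (S.erase i)

section MixedPerm

variable {ι : Type*} [DecidableEq ι]

theorem mixedPerm_cons (v : ι → ℝ) (l : List (ι → ℝ)) (S : Finset ι) :
    mixedPerm (v :: l) S = ∑ i ∈ S, v i * mixedPerm l (S.erase i) := rfl

theorem mixedPerm_cons_cons (v w : ι → ℝ) (l : List (ι → ℝ)) (S : Finset ι) :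
    mixedPerm (v :: w :: l) S = ∑ i ∈ S, ∑ j ∈ S,
      v i * w j * (if i = j then 0 else mixedPerm l ((S.erase i).erase j)) := by
  rw [mixedPerm_cons]
  refine Finset.sum_congr rfl fun i hi => ?_
  rw [mixedPerm_cons, Finset.mul_sum, ← Finset.add_sum_erase S _ hi]
  simp only [if_true, mul_zero, zero_add]
  refine Finset.sum_congr rfl fun j hj => ?_
  rw [if_neg (Finset.ne_of_mem_erase hj).symm, mul_assoc]

theorem mixedPerm_perm {l l' : List (ι → ℝ)} (h : l.Perm l') (S : Finset ι) :
    mixedPerm l S = mixedPerm l' S := by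
  induction h generalizing S with
  | nil => rfl
  | cons v _ ih => simp only [mixedPerm_cons, ih]
  | swap v w l =>
    rw [mixedPerm_cons_cons, mixedPerm_cons_cons, Finset.sum_comm]
    refine Finset.sum_congr rfl fun i _ => Finset.sum_congr rfl fun j _ => ?_
    rw [Finset.erase_right_comm, mul_comm (w j)]
    simp only [eq_comm]
  | trans _ _ ih1 ih2 => rw [ih1, ih2]

theorem mixedPerm_swap (v w : ι → ℝ) (l : List (ι → ℝ)) (S : Finset ι) :
    mixedPerm (v :: w :: l) S = mixedPerm (w :: v :: l) S :=
  mixedPerm_perm (List.Perm.swap _ _ _) S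

theorem mixedPerm_smul_add_cons (s t : ℝ) (v w : ι → ℝ) (l : List (ι → ℝ)) (S : Finset ι) :
    mixedPerm ((fun i => s * v i + t * w i) :: l) S =
      s * mixedPerm (v :: l) S + t * mixedPerm (w :: l) S := by
  simp only [mixedPerm_cons, Finset.mul_sum, ← Finset.sum_add_distrib]
  exact Finset.sum_congr rfl fun i _ => by ring

theorem mixedPerm_pos {l : List (ι → ℝ)} (hl : ∀ v ∈ l, ∀ i, 0 < v i) {S : Finset ι}
    (hS : l.length ≤ S.card) : 0 < mixedPerm l S := by
  induction l generalizing S with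
  | nil => exact one_pos
  | cons v l ih =>
    rw [List.length_cons] at hS
    refine Finset.sum_pos (fun i hi => mul_pos (hl v (by simp) i)
      (ih (fun w hw => hl w (by simp [hw])) ?_)) ?_
    · rw [Finset.card_erase_of_mem hi]
      omega
    · rw [← Finset.card_pos]
      omega

/-- The reverse Cauchy–Schwarz inequality for a quadratic form that is nonpositive on the
orthogonal complement of `a`. -/
theorem mixedPerm_reverse_cauchy_schwarz {l : List (ι → ℝ)} {S : Finset ι} {a y : ι → ℝ}
    (hneg : ∀ z : ι → ℝ, mixedPerm (z :: a :: l) S = 0 → mixedPerm (z :: z :: l) S ≤ 0)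
    (hya : 0 < mixedPerm (y :: a :: l) S) (hyy : 0 < mixedPerm (y :: y :: l) S) (x : ι → ℝ) :
    mixedPerm (x :: x :: l) S * mixedPerm (y :: y :: l) S ≤ mixedPerm (x :: y :: l) S ^ 2 := by
  set s := mixedPerm (y :: a :: l) S with hs
  set t := -mixedPerm (x :: a :: l) S with ht
  have h1 := hneg (fun i => s * x i + t * y i) (by
    rw [mixedPerm_smul_add_cons]
    linear_combination (-s) * ht + (-t) * hs)
  rw [mixedPerm_smul_add_cons, mixedPerm_swap x, mixedPerm_swap y, mixedPerm_smul_add_cons,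
    mixedPerm_smul_add_cons, mixedPerm_swap y x] at h1
  by_contra! hlt
  nlinarith [sq_nonneg (t * mixedPerm (y :: y :: l) S + s * mixedPerm (x :: y :: l) S),
    mul_pos (pow_pos hya 2) (sub_pos.2 hlt), mul_nonpos_of_nonneg_of_nonpos hyy.le h1]

/-- **Alexandrov's inequality** for permanents. -/
theorem mixedPerm_alexandrov {l : List (ι → ℝ)} (hl : ∀ v ∈ l, ∀ i, 0 < v i) {S : Finset ι}
    (hS : S.card = l.length + 2) (x : ι → ℝ) {y : ι → ℝ} (hy : ∀ i, 0 < y i) :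
    mixedPerm (x :: x :: l) S * mixedPerm (y :: y :: l) S ≤ mixedPerm (x :: y :: l) S ^ 2 := by
  induction l generalizing S x y with
  | nil =>
    obtain ⟨i, j, hij, rfl⟩ := Finset.card_eq_two.1 hS
    rw [mixedPerm_cons_cons, mixedPerm_cons_cons, mixedPerm_cons_cons]
    simp only [Finset.sum_pair hij, mixedPerm, if_true, if_neg hij, if_neg hij.symm]
    nlinarith [sq_nonneg (x i * y j - x j * y i)]
  | cons a l ih =>
    rw [List.length_cons] at hS
    have ha := hl a (by simp)
    have hl' : ∀ v ∈ l, ∀ i, 0 < v i := fun v hv => hl v (by simp [hv])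
    refine mixedPerm_reverse_cauchy_schwarz (a := a) (fun z hz => ?_) ?_ ?_ x
    · set B : Matrix S S ℝ := Matrix.of fun i j =>
        if i.1 = j.1 then 0 else mixedPerm (a :: l) ((S.erase i.1).erase j.1) with hBdef
      have hB : ∀ v : ι → ℝ, ∀ i : S,
          B.mulVec (fun j => v j.1) i = mixedPerm (v :: a :: l) (S.erase i.1) := fun v i => by
        rw [mixedPerm_cons]
        simp only [Matrix.mulVec, dotProduct, hBdef, Matrix.of_apply]
        rw [Finset.sum_coe_sort S fun j => (if i.1 = j then 0 else
          mixedPerm (a :: l) ((S.erase i.1).erase j)) * v j, ← Finset.add_sum_erase S _ i.2]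
        simp only [if_true, zero_mul, zero_add]
        refine Finset.sum_congr rfl fun j hj => ?_
        rw [if_neg (Finset.ne_of_mem_erase hj).symm, mul_comm]
      have hBv : ∀ v w : ι → ℝ, (fun j : S => v j.1) ⬝ᵥ B.mulVec (fun j => w j.1) =
          mixedPerm (v :: w :: a :: l) S := fun v w => by
        simp only [dotProduct, hB]
        exact Finset.sum_coe_sort S fun i => v i * mixedPerm (w :: a :: l) (S.erase i)
      have hcard : ∀ i : S, (S.erase i.1).card = l.length + 2 := fun i => by
        rw [Finset.card_erase_of_mem i.2, hS]
        omega
      rw [← hBv] at hz ⊢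
      refine dotProduct_mulVec_nonpos (a := fun j => a j.1) ?_ ?_ ?_ (fun i => ha _) ?_ ?_ hz
      · intro i j
        simp only [hBdef, Matrix.of_apply, Finset.erase_right_comm (a := i.1), eq_comm]
      · intro i j hij
        rw [hBdef, Matrix.of_apply, if_neg (Subtype.coe_ne_coe.2 hij)]
        refine mixedPerm_pos hl ?_
        rw [Finset.card_erase_of_mem
          (Finset.mem_erase.2 ⟨(Subtype.coe_ne_coe.2 hij).symm, j.2⟩), hcard, List.length_cons]
        omega
      · intro i
        simp [hBdef]
      · intro i
        rw [hB]
        refine mixedPerm_pos (by simpa [ha] using hl') ?_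
        rw [hcard]
        simp
      · intro u
        obtain ⟨u, rfl⟩ : ∃ u' : ι → ℝ, u = fun i : S => u' i.1 :=
          ⟨fun i => if h : i ∈ S then u ⟨i, h⟩ else 0, by ext i; simp⟩
        have hperm : List.Perm (u :: u :: a :: l) (a :: u :: u :: l) :=
          List.perm_middle (l₁ := [u, u])
        rw [hBv, mixedPerm_perm hperm, mixedPerm_cons, ← Finset.sum_coe_sort]
        refine Finset.sum_le_sum fun i _ => ?_
        rw [hB, hB, mul_div_assoc]
        refine mul_le_mul_of_nonneg_left ?_ (ha _).le
        rw [le_div_iff₀ (mixedPerm_pos (by simpa [ha] using hl') (by rw [hcard]; simp))]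
        exact ih hl' (hcard i) u ha
    · exact mixedPerm_pos (by simpa [ha, hy] using hl') (by simp [hS])
    · exact mixedPerm_pos (by simpa [ha, hy] using hl') (by simp [hS])

theorem le_mul_pow_of_log_concave {b : ℕ → ℝ} {n : ℕ} (hb : ∀ i ≤ n, 0 < b i)
    (hlc : ∀ i, i + 2 ≤ n → b i * b (i + 2) ≤ b (i + 1) ^ 2) :
    b n ≤ b 0 * (b 1 / b 0) ^ n := by
  have hratio : ∀ i, i + 1 ≤ n → b (i + 1) ≤ b i * (b 1 / b 0) := by
    intro i
    induction i with
    | zero =>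
      intro h
      rw [mul_div_cancel₀ _ (hb 0 (by omega)).ne']
    | succ i ih =>
      intro h
      have h0 := hb i (by omega)
      have h1 := hb (i + 1) (by omega)
      have h2 := hlc i h
      have h3 := ih (by omega)
      have : b i * b (i + 2) ≤ b i * (b (i + 1) * (b 1 / b 0)) := by nlinarith
      exact le_of_mul_le_mul_left this h0
  have : ∀ i ≤ n, b i ≤ b 0 * (b 1 / b 0) ^ i := by
    intro i
    induction i with
    | zero => simp
    | succ i ih =>
      intro h
      have h01 : 0 ≤ b 1 / b 0 := (div_pos (hb 1 (by omega)) (hb 0 (by omega))).le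
      calc b (i + 1) ≤ b i * (b 1 / b 0) := hratio i h
        _ ≤ b 0 * (b 1 / b 0) ^ i * (b 1 / b 0) :=
          mul_le_mul_of_nonneg_right (ih (by omega)) h01
        _ = _ := by ring
  exact this n le_rfl

theorem mixedPerm_replicate_le {l : List (ι → ℝ)} (hl : ∀ v ∈ l, ∀ i, 0 < v i) {S : Finset ι}
    {k : ℕ} (hS : S.card = l.length + (k + 1)) {u w : ι → ℝ} (hu : ∀ i, 0 < u i)
    (hw : ∀ i, 0 < w i) :
    mixedPerm (List.replicate (k + 1) u ++ l) S ≤ mixedPerm (List.replicate (k + 1) w ++ l) S *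
      (mixedPerm (u :: (List.replicate k w ++ l)) S /
        mixedPerm (List.replicate (k + 1) w ++ l) S) ^ (k + 1) := by
  have h := le_mul_pow_of_log_concave (n := k + 1)
    (b := fun i => mixedPerm (List.replicate i u ++ (List.replicate (k + 1 - i) w ++ l)) S) ?_ ?_
  · simpa using h
  · intro i hi
    refine mixedPerm_pos (fun v hv => ?_) ?_
    · simp only [List.mem_append, List.mem_replicate] at hv
      rcases hv with ⟨_, rfl⟩ | ⟨_, rfl⟩ | hv
      exacts [hu, hw, hl v hv]
    · simp only [List.length_append, List.length_replicate]
      omega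
  · intro i hi
    set L := List.replicate i u ++ (List.replicate (k + 1 - (i + 2)) w ++ l) with hL
    have hLpos : ∀ v ∈ L, ∀ i, 0 < v i := fun v hv => by
      simp only [hL, List.mem_append, List.mem_replicate] at hv
      rcases hv with ⟨_, rfl⟩ | ⟨_, rfl⟩ | hv
      exacts [hu, hw, hl v hv]
    have hLcard : S.card = L.length + 2 := by
      simp only [hL, List.length_append, List.length_replicate]
      omega
    have e0 : mixedPerm (List.replicate i u ++ (List.replicate (k + 1 - i) w ++ l)) S =
        mixedPerm (w :: w :: L) S := by
      rw [show k + 1 - i = k + 1 - (i + 2) + 2 by omega, List.replicate_succ, List.replicate_succ]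
      exact mixedPerm_perm (List.perm_middle.trans (List.perm_middle.cons _)) S
    have e1 : mixedPerm (List.replicate (i + 1) u ++ (List.replicate (k + 1 - (i + 1)) w ++ l)) S =
        mixedPerm (u :: w :: L) S := by
      rw [show k + 1 - (i + 1) = k + 1 - (i + 2) + 1 by omega, List.replicate_succ,
        List.replicate_succ]
      exact mixedPerm_perm (List.perm_middle.cons _) S
    have e2 : mixedPerm (List.replicate (i + 2) u ++ (List.replicate (k + 1 - (i + 2)) w ++ l)) S =
        mixedPerm (u :: u :: L) S := rfl
    simp only [e0, e1, e2]
    rw [mul_comm]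
    exact mixedPerm_alexandrov hLpos hLcard u hw

/-- The step of Gurvits' capacity argument. -/
theorem capacity_step {l : List (ι → ℝ)} (hl : ∀ v ∈ l, ∀ i, 0 < v i) {S : Finset ι}
    {k : ℕ} (hk : 0 < k) (hS : S.card = l.length + (k + 1)) {a w : ι → ℝ} (ha : ∀ i, 0 < a i)
    (hw : ∀ i, 0 < w i) {E : ℝ}
    (hE : ∀ t : ℝ, 0 < t → E * (k + 1 : ℝ) ^ (k + 1) * t ≤
      mixedPerm (List.replicate (k + 1) (fun i => w i + t * a i) ++ l) S) :
    E * (k : ℝ) ^ k ≤ mixedPerm (List.replicate k w ++ a :: l) S := by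
  have hpos : ∀ v ∈ List.replicate k w ++ l, ∀ i, 0 < v i := fun v hv => by
    simp only [List.mem_append, List.mem_replicate] at hv
    rcases hv with ⟨_, rfl⟩ | hv
    exacts [hw, hl v hv]
  rw [mixedPerm_perm List.perm_middle]
  set α₁ := mixedPerm (a :: (List.replicate k w ++ l)) S with hα₁
  set α₀ := mixedPerm (List.replicate (k + 1) w ++ l) S with hα₀
  have hα₁pos : 0 < α₁ := mixedPerm_pos (by simpa [ha] using hpos) (by simp; omega)
  have hα₀pos : 0 < α₀ := mixedPerm_pos (l := w :: (List.replicate k w ++ l))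
    (List.forall_mem_cons.2 ⟨hw, hpos⟩) (by simp; omega)
  have hk' : (0 : ℝ) < k := by exact_mod_cast hk
  set t := α₀ / (k * α₁) with ht
  have htpos : 0 < t := by positivity
  have h1 := (hE t htpos).trans
    (mixedPerm_replicate_le hl hS (fun i => by have := ha i; have := hw i; positivity) hw)
  have h2 : mixedPerm ((fun i => w i + t * a i) :: (List.replicate k w ++ l)) S =
      α₀ + t * α₁ := by
    have := mixedPerm_smul_add_cons 1 t w a (List.replicate k w ++ l) S
    simp only [one_mul] at this
    exact this
  rw [h2, ← hα₀] at h1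
  have h3 : (α₀ + t * α₁) / α₀ = (k + 1) / k := by
    rw [ht]
    field_simp
  rw [h3, div_pow, ht] at h1
  have h4 : 0 < (k + 1 : ℝ) ^ (k + 1) * (α₀ / (k * α₁)) := by positivity
  refine le_of_mul_le_mul_right ?_ h4
  calc E * (k : ℝ) ^ k * ((k + 1 : ℝ) ^ (k + 1) * (α₀ / (k * α₁)))
      = (k : ℝ) ^ k * (E * (k + 1 : ℝ) ^ (k + 1) * (α₀ / (k * α₁))) := by ring
    _ ≤ (k : ℝ) ^ k * (α₀ * ((k + 1 : ℝ) ^ (k + 1) / (k : ℝ) ^ (k + 1))) :=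
      mul_le_mul_of_nonneg_left h1 (by positivity)
    _ = _ := by
      field_simp
      ring

theorem mixedPerm_replicate (n : ℕ) (v : ι → ℝ) {S : Finset ι} (hS : S.card = n) :
    mixedPerm (List.replicate n v) S = n.factorial * ∏ i ∈ S, v i := by
  induction n generalizing S with
  | zero =>
    rw [Finset.card_eq_zero.1 hS]
    simp [mixedPerm]
  | succ n ih =>
    rw [List.replicate_succ, mixedPerm_cons]
    have : ∀ i ∈ S, v i * mixedPerm (List.replicate n v) (S.erase i) =
        n.factorial * ∏ i ∈ S, v i := fun i hi => by
      rw [ih (by rw [Finset.card_erase_of_mem hi, hS]; rfl), ← Finset.mul_prod_erase S v hi]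
      ring
    rw [Finset.sum_congr rfl this, Finset.sum_const, hS, Nat.factorial_succ]
    push_cast
    ring

/-- **Gurvits' capacity bound** for a matrix with positive columns and capacity at least `1`. -/
theorem le_mixedPerm_of_capacity {n : ℕ} {c : ℕ → ι → ℝ} (hc : ∀ j i, 0 < c j i) {S : Finset ι}
    (hS : S.card = n) (hcap : ∀ x : ℕ → ℝ, (∀ j, 0 < x j) →
      ∏ j ∈ Finset.range n, x j ≤ ∏ i ∈ S, ∑ j ∈ Finset.range n, x j * c j i) :
    (n.factorial : ℝ) / (n : ℝ) ^ n ≤ mixedPerm ((List.range n).map c) S := by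
  have key : ∀ d k, k + d = n → ∀ x : ℕ → ℝ, (∀ j, 0 < x j) →
      (n.factorial : ℝ) / (n : ℝ) ^ n * (k : ℝ) ^ k * ∏ j ∈ Finset.range k, x j ≤
        mixedPerm (List.replicate k (fun i => ∑ j ∈ Finset.range k, x j * c j i) ++
          ((List.range n).drop k).map c) S := by
    intro d
    induction d with
    | zero =>
      rintro k rfl x hx
      rw [Nat.add_zero] at hcap hS ⊢
      rw [List.drop_of_length_le (by simp), List.map_nil, List.append_nil,
        mixedPerm_replicate _ _ hS, div_mul_cancel₀ _ (by
          rcases Nat.eq_zero_or_pos k with rfl | h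
          · simp
          · positivity)]
      exact mul_le_mul_of_nonneg_left (hcap x hx) (by positivity)
    | succ d ih =>
      intro k hk x hx
      have hdrop : ((List.range n).drop k).map c =
          c k :: ((List.range n).drop (k + 1)).map c := by
        rw [List.drop_eq_getElem_cons (by simp; omega)]
        simp
      have hstep : ∀ t : ℝ, 0 < t →
          (n.factorial : ℝ) / (n : ℝ) ^ n * (∏ j ∈ Finset.range k, x j) *
            (k + 1 : ℝ) ^ (k + 1) * t ≤
          mixedPerm (List.replicate (k + 1)
            (fun i => ∑ j ∈ Finset.range k, x j * c j i + t * c k i) ++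
              ((List.range n).drop (k + 1)).map c) S := by
        intro t ht
        have h := ih (k + 1) (by omega) (Function.update x k t) (fun j => by
          rcases eq_or_ne j k with rfl | h
          · simpa using ht
          · simpa [h] using hx j)
        have e1 : ∀ j ∈ Finset.range k, Function.update x k t j = x j := fun j hj =>
          Function.update_of_ne (Finset.mem_range.1 hj).ne _ _
        have e2 : ∀ i, ∑ j ∈ Finset.range k, Function.update x k t j * c j i =
            ∑ j ∈ Finset.range k, x j * c j i := fun i =>
          Finset.sum_congr rfl fun j hj => by rw [e1 j hj]
        simp only [Finset.sum_range_succ, Finset.prod_range_succ, e2, Finset.prod_congr rfl e1,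
          Function.update_self] at h
        refine le_of_eq_of_le ?_ h
        push_cast
        ring
      rw [hdrop]
      rcases Nat.eq_zero_or_pos k with rfl | hkpos
      · simpa using hstep 1 one_pos
      · rw [mul_right_comm]
        refine capacity_step (fun v hv => ?_) hkpos ?_ (hc k) (fun i => ?_) hstep
        · obtain ⟨j, -, rfl⟩ := List.mem_map.1 hv
          exact hc j
        · simp only [List.length_map, List.length_drop, List.length_range]
          omega
        · exact Finset.sum_pos (fun j _ => mul_pos (hx j) (hc j i))
            (Finset.nonempty_range_iff.2 hkpos.ne')
  simpa using key n 0 (by simp) (fun _ => 1) fun _ => one_pos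

end MixedPerm

theorem mixedPerm_ofFn {ι : Type*} [Fintype ι] [DecidableEq ι] {m : ℕ} (c : Fin m → ι → ℝ)
    (S : Finset ι) :
    mixedPerm (List.ofFn c) S = ∑ f : Fin m → ι,
      if Function.Injective f ∧ ∀ k, f k ∈ S then ∏ k, c k (f k) else 0 := by
  induction m generalizing S with
  | zero => simp [mixedPerm, Function.injective_of_subsingleton]
  | succ m ih =>
    rw [List.ofFn_succ, mixedPerm_cons, ← (Fin.consEquiv fun _ => ι).sum_comp,
      Fintype.sum_prod_type, ← Finset.sum_subset (Finset.subset_univ S)]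
    · refine Finset.sum_congr rfl fun i hi => ?_
      rw [ih, Finset.mul_sum]
      refine Finset.sum_congr rfl fun f _ => ?_
      have hiff : (Function.Injective (Fin.cons i f : Fin (m + 1) → ι) ∧
          ∀ k, (Fin.cons i f : Fin (m + 1) → ι) k ∈ S) ↔
          Function.Injective f ∧ ∀ k, f k ∈ S.erase i := by
        rw [Fin.cons_injective_iff, Fin.forall_fin_succ]
        simp only [Fin.cons_zero, Fin.cons_succ, Finset.mem_erase, Set.mem_range, not_exists]
        constructor
        · rintro ⟨⟨h1, h2⟩, -, h3⟩
          exact ⟨h2, fun k => ⟨h1 k, h3 k⟩⟩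
        · rintro ⟨h1, h2⟩
          exact ⟨⟨fun k => (h2 k).1, h1⟩, hi, fun k => (h2 k).2⟩
      have hcons : Fin.consEquiv (fun _ => ι) (i, f) = Fin.cons i f := rfl
      simp only [hcons, hiff, Fin.prod_univ_succ, Fin.cons_zero, Fin.cons_succ,
        mul_ite, mul_zero]
    · intro i _ hi
      refine Finset.sum_eq_zero fun f _ => if_neg fun h => hi ?_
      simpa using h.2 0

theorem perm'_eq_mixedPerm {n : ℕ} (A : Matrix (Fin n) (Fin n) ℝ) :
    perm' A = mixedPerm (List.ofFn fun i j => A i j) Finset.univ := by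
  rw [mixedPerm_ofFn, perm', ← Finset.sum_filter]
  refine Finset.sum_bij (fun σ _ => ⇑σ) (fun σ _ => by simp [σ.injective])
    (fun σ _ τ _ h => DFunLike.coe_injective h) (fun f hf => ?_) fun σ _ => rfl
  simp only [Finset.mem_univ, implies_true, and_true, Finset.mem_filter, true_and] at hf
  exact ⟨Equiv.ofBijective f (Finite.injective_iff_bijective.1 hf), Finset.mem_univ _, rfl⟩

theorem prod_le_prod_sum_of_doubly_stochastic {n : ℕ} {A : Matrix (Fin n) (Fin n) ℝ}
    (hA : ∀ i j, 0 ≤ A i j) (hrow : ∀ i, ∑ j, A i j = 1) (hcol : ∀ j, ∑ i, A i j = 1)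
    {x : Fin n → ℝ} (hx : ∀ j, 0 < x j) : ∏ j, x j ≤ ∏ i, ∑ j, x j * A j i :=
  calc ∏ j, x j = ∏ j, ∏ i, x j ^ A j i := by
        refine Finset.prod_congr rfl fun j _ => ?_
        rw [← Real.rpow_sum_of_pos (hx j), hrow, Real.rpow_one]
    _ = ∏ i, ∏ j, x j ^ A j i := Finset.prod_comm
    _ ≤ ∏ i, ∑ j, x j * A j i := by
        refine Finset.prod_le_prod
          (fun i _ => Finset.prod_nonneg fun j _ => Real.rpow_nonneg (hx j).le _) fun i _ => ?_
        simp only [mul_comm (x _)]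
        exact Real.geom_mean_le_arith_mean_weighted _ _ _ (fun j _ => hA j i) (hcol i)
          fun j _ => (hx j).le

theorem van_der_waerden_of_pos {n : ℕ} {A : Matrix (Fin n) (Fin n) ℝ}
    (hA : ∀ i j, 0 < A i j) (hrow : ∀ i, ∑ j, A i j = 1) (hcol : ∀ j, ∑ i, A i j = 1) :
    (n.factorial : ℝ) / (n : ℝ) ^ n ≤ perm' A := by
  set c : ℕ → Fin n → ℝ := fun j => if h : j < n then fun i => A ⟨j, h⟩ i else fun _ => 1 with hc
  have hcA : ∀ j i : Fin n, c j i = A j i := fun j i => by simp [hc]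
  have hlist : (List.ofFn fun i j => A i j) = (List.range n).map c := by
    refine List.ext_getElem (by simp) fun j h1 h2 => ?_
    have hj : j < n := by simpa using h1
    simp [hc, hj]
  rw [perm'_eq_mixedPerm, hlist]
  refine le_mixedPerm_of_capacity (fun j i => ?_) (by simp) fun x hx => ?_
  · by_cases h : j < n
    · simpa [hc, h] using hA _ _
    · simp [hc, h]
  · simp only [← Fin.prod_univ_eq_prod_range, ← Fin.sum_univ_eq_sum_range, hcA]
    exact prod_le_prod_sum_of_doubly_stochastic (fun i j => (hA i j).le) hrow hcol
      fun j => hx j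

/-- **The van der Waerden conjecture** (Egorychev, Falikman): the permanent of a doubly stochastic
matrix of size `n` is at least `n! / n ^ n`. -/
theorem van_der_waerden {n : ℕ} (hn : 0 < n) {A : Matrix (Fin n) (Fin n) ℝ}
    (hA : ∀ i j, 0 ≤ A i j) (hrow : ∀ i, ∑ j, A i j = 1) (hcol : ∀ j, ∑ i, A i j = 1) :
    (n.factorial : ℝ) / (n : ℝ) ^ n ≤ perm' A := by
  set F : ℝ → Matrix (Fin n) (Fin n) ℝ := fun t => Matrix.of fun i j =>
    (1 - t) * A i j + t * (1 / n) with hF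
  have hn' : (0 : ℝ) < n := by exact_mod_cast hn
  have hcont : Continuous fun t => perm' (F t) := by
    simp only [perm', hF, Matrix.of_apply]
    fun_prop
  have h0 : perm' (F 0) = perm' A := by simp [perm', hF]
  have hlim : Filter.Tendsto (fun t => perm' (F t)) (nhdsWithin 0 (Set.Ioi 0))
      (nhds (perm' A)) := h0 ▸ hcont.continuousWithinAt.tendsto
  refine ge_of_tendsto hlim ?_
  filter_upwards [Ioo_mem_nhdsGT (zero_lt_one' ℝ)] with t ht
  have hcancel : (n : ℝ) * (t * (1 / n)) = t := by field_simp
  refine van_der_waerden_of_pos (fun i j => ?_) (fun i => ?_) fun j => ?_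
  · exact add_pos_of_nonneg_of_pos (mul_nonneg (sub_pos.2 ht.2).le (hA i j))
      (mul_pos ht.1 (by positivity))
  · simp [hF, Finset.sum_add_distrib, ← Finset.mul_sum, hrow]
    field_simp
    ring
  · simp [hF, Finset.sum_add_distrib, ← Finset.mul_sum, hcol]
    field_simp
    ring

section Balanced

variable {n : ℕ}

/-- An assignment `Fin M → Fin n → Fin n` is balanced if every value is attained `M` times. -/
def IsBalanced {M : ℕ} (f : Fin M → Fin n → Fin n) : Prop :=
  ∀ j, ∑ m, ∑ i, (if f m i = j then 1 else 0) = M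

open Classical in
/-- The sum of the weights `∏ m i, θ i (f m i)` over balanced assignments `f`. -/
def balancedSum (θ : Matrix (Fin n) (Fin n) ℝ) (M : ℕ) : ℝ :=
  ∑ f : Fin M → Fin n → Fin n, if IsBalanced f then ∏ m, ∏ i, θ i (f m i) else 0

theorem prod_boole_eq (h g : Fin n → Fin n) :
    ∏ i, (if h i = g i then (1 : ℝ) else 0) = if h = g then 1 else 0 := by
  simp [Finset.prod_ite_zero, funext_iff]

theorem isBalanced_cons_perm {M : ℕ} (σ : Equiv.Perm (Fin n)) (f : Fin M → Fin n → Fin n) :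
    IsBalanced (Fin.cons (⇑σ) f : Fin (M + 1) → Fin n → Fin n) ↔ IsBalanced f := by
  have h : ∀ j, ∑ i, (if σ i = j then 1 else 0) = 1 := fun j => by
    simp [← Equiv.eq_symm_apply]
  simp only [IsBalanced, Fin.sum_univ_succ, Fin.cons_zero, Fin.cons_succ, h]
  refine forall_congr' fun j => ?_
  omega

theorem isBalanced_reindex {M : ℕ} (e : Fin n → Equiv.Perm (Fin M))
    (f : Fin M → Fin n → Fin n) : IsBalanced (fun m i => f (e i m) i) ↔ IsBalanced f := by
  refine forall_congr' fun j => ?_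
  rw [Finset.sum_comm, Finset.sum_comm (f := fun m i => if f m i = j then 1 else 0)]
  rw [Finset.sum_congr rfl fun i _ =>
    Equiv.sum_comp (e i) fun m => if f m i = j then 1 else 0]

open Classical in
/-- The sum of the weights of balanced assignments `f`, weighted by whether `i ↦ f (s i) i` is a
permutation. -/
def transversalSum (θ : Matrix (Fin n) (Fin n) ℝ) {M : ℕ} (s : Fin n → Fin M) : ℝ :=
  ∑ f : Fin M → Fin n → Fin n, if IsBalanced f then
    (∏ m, ∏ i, θ i (f m i)) * ∑ σ : Equiv.Perm (Fin n), ∏ i, (if f (s i) i = σ i then 1 else 0)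
  else 0

theorem transversalSum_eq (θ : Matrix (Fin n) (Fin n) ℝ) {M : ℕ}
    (s : Fin n → Fin (M + 1)) :
    transversalSum θ s = transversalSum θ fun _ => (0 : Fin (M + 1)) := by
  set E : (Fin (M + 1) → Fin n → Fin n) ≃ (Fin (M + 1) → Fin n → Fin n) :=
    { toFun := fun f m i => f (Equiv.swap 0 (s i) m) i
      invFun := fun f m i => f (Equiv.swap 0 (s i) m) i
      left_inv := fun f => by simp
      right_inv := fun f => by simp } with hE
  rw [transversalSum, transversalSum, ← E.sum_comp]
  refine Finset.sum_congr rfl fun f _ => ?_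
  have hb : IsBalanced (E f) ↔ IsBalanced f :=
    isBalanced_reindex (fun i => Equiv.swap 0 (s i)) f
  have hw : ∏ m, ∏ i, θ i (E f m i) = ∏ m, ∏ i, θ i (f m i) := by
    rw [Finset.prod_comm, Finset.prod_comm (f := fun m i => θ i (f m i))]
    exact Finset.prod_congr rfl fun i _ =>
      Equiv.prod_comp (Equiv.swap 0 (s i)) fun m => θ i (f m i)
  have h0 : ∀ i, E f (s i) i = f 0 i := fun i => by simp [hE]
  by_cases hf : IsBalanced f
  · rw [if_pos (hb.2 hf), if_pos hf, hw]
    simp only [h0]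
  · rw [if_neg (mt hb.1 hf), if_neg hf]

theorem transversalSum_zero (θ : Matrix (Fin n) (Fin n) ℝ) (M : ℕ) :
    transversalSum θ (fun _ => (0 : Fin (M + 1))) = perm' θ * balancedSum θ M := by
  classical
  rw [transversalSum, ← (Fin.consEquiv fun _ => Fin n → Fin n).sum_comp, Fintype.sum_prod_type,
    Finset.sum_comm, balancedSum, Finset.mul_sum]
  refine Finset.sum_congr rfl fun f _ => ?_
  have hcons : ∀ h, Fin.consEquiv (fun _ => Fin n → Fin n) (h, f) = Fin.cons h f := fun _ => rfl
  simp only [hcons, Fin.prod_univ_succ, Fin.cons_zero, Fin.cons_succ, prod_boole_eq,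
    Finset.mul_sum, mul_ite, mul_one, mul_zero]
  simp only [← Finset.sum_filter (fun h : Fin n → Fin n => IsBalanced (Fin.cons h f :
    Fin (M + 1) → Fin n → Fin n))]
  rw [Finset.sum_comm, perm', Finset.sum_mul]
  split_ifs with hf
  · refine Finset.sum_congr rfl fun σ _ => ?_
    rw [Finset.sum_eq_single_of_mem (⇑σ) (by simpa [isBalanced_cons_perm] using hf)
      fun h _ hne => if_neg hne]
    simp
  · refine Finset.sum_eq_zero fun σ _ => Finset.sum_eq_zero fun h hh => if_neg ?_
    rintro rfl
    simp [isBalanced_cons_perm, hf] at hh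

theorem sum_transversal {M : ℕ} (f : Fin M → Fin n → Fin n) :
    ∑ s : Fin n → Fin M, ∑ σ : Equiv.Perm (Fin n), ∏ i, (if f (s i) i = σ i then (1 : ℝ) else 0) =
      perm' (Matrix.of fun i j => ∑ m, if f m i = j then (1 : ℝ) else 0) := by
  rw [Finset.sum_comm, perm']
  refine Finset.sum_congr rfl fun σ _ => ?_
  simp only [Matrix.of_apply, Finset.prod_univ_sum, Fintype.piFinset_univ]

theorem sum_transversal_ge (hn : 0 < n) {M : ℕ} (hM : 0 < M) {f : Fin M → Fin n → Fin n}
    (hf : IsBalanced f) : (M : ℝ) ^ n * ((n.factorial : ℝ) / (n : ℝ) ^ n) ≤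
      ∑ s : Fin n → Fin M, ∑ σ : Equiv.Perm (Fin n),
        ∏ i, (if f (s i) i = σ i then (1 : ℝ) else 0) := by
  have hM' : (M : ℝ) ≠ 0 := by exact_mod_cast hM.ne'
  have h := van_der_waerden hn
    (A := Matrix.of fun i j => (∑ m, if f m i = j then (1 : ℝ) else 0) / M)
    (fun i j => div_nonneg (Finset.sum_nonneg fun m _ => by split_ifs <;> norm_num) M.cast_nonneg)
    (fun i => by
      simp only [Matrix.of_apply]
      rw [← Finset.sum_div, Finset.sum_comm]
      simp [hM'])
    (fun j => by
      simp only [Matrix.of_apply]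
      rw [← Finset.sum_div, Finset.sum_comm, div_eq_one_iff_eq hM']
      exact_mod_cast hf j)
  rw [sum_transversal]
  simp only [perm', Matrix.of_apply, Finset.prod_div_distrib, Finset.prod_const, Finset.card_univ,
    Fintype.card_fin, ← Finset.sum_div] at h ⊢
  rw [le_div_iff₀ (by positivity)] at h
  linarith

theorem balancedSum_succ_le (hn : 0 < n) {θ : Matrix (Fin n) (Fin n) ℝ} (hθ : ∀ i j, 0 ≤ θ i j)
    (M : ℕ) : (n.factorial : ℝ) / (n : ℝ) ^ n * balancedSum θ (M + 1) ≤
      perm' θ * balancedSum θ M := by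
  classical
  have h1 : ∑ s : Fin n → Fin (M + 1), transversalSum θ s =
      ((M + 1 : ℕ) : ℝ) ^ n * (perm' θ * balancedSum θ M) := by
    simp [transversalSum_eq θ, transversalSum_zero]
  have h2 : ((M + 1 : ℕ) : ℝ) ^ n * ((n.factorial : ℝ) / (n : ℝ) ^ n * balancedSum θ (M + 1)) ≤
      ∑ s : Fin n → Fin (M + 1), transversalSum θ s := by
    simp only [transversalSum, balancedSum]
    rw [Finset.sum_comm, Finset.mul_sum, Finset.mul_sum]
    refine Finset.sum_le_sum fun f _ => ?_
    by_cases hf : IsBalanced f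
    · simp only [if_pos hf]
      rw [← Finset.mul_sum, ← mul_assoc, mul_comm (∏ m, ∏ i, θ i (f m i))]
      exact mul_le_mul_of_nonneg_right (sum_transversal_ge hn M.succ_pos hf)
        (Finset.prod_nonneg fun m _ => Finset.prod_nonneg fun i _ => hθ _ _)
    · simp [hf]
  rw [h1] at h2
  exact le_of_mul_le_mul_left h2 (by positivity)

theorem perm_mul_balancedSum_le {θ : Matrix (Fin n) (Fin n) ℝ} (hθ : ∀ i j, 0 ≤ θ i j)
    (M : ℕ) : perm' θ * balancedSum θ M ≤ balancedSum θ (M + 1) := by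
  classical
  rw [← transversalSum_zero, transversalSum, balancedSum]
  refine Finset.sum_le_sum fun f _ => ?_
  split_ifs
  · refine mul_le_of_le_one_right
      (Finset.prod_nonneg fun m _ => Finset.prod_nonneg fun i _ => hθ _ _) ?_
    simp only [prod_boole_eq, Finset.sum_boole]
    norm_cast
    refine Finset.card_le_one.2 fun σ hσ τ hτ => DFunLike.coe_injective ?_
    simp only [Finset.mem_filter, Finset.mem_univ, true_and] at hσ hτ
    exact hσ.symm.trans hτ
  · exact le_rfl

theorem balancedSum_zero (θ : Matrix (Fin n) (Fin n) ℝ) : balancedSum θ 0 = 1 := by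
  simp [balancedSum, IsBalanced]

theorem balancedSum_one_le {θ : Matrix (Fin n) (Fin n) ℝ} (hθ : ∀ i j, 0 ≤ θ i j) :
    balancedSum θ 1 ≤ perm' θ := by
  classical
  rw [← mul_one (perm' θ), ← balancedSum_zero θ, ← transversalSum_zero, transversalSum,
    balancedSum]
  refine Finset.sum_le_sum fun f _ => ?_
  split_ifs with hf
  · refine le_mul_of_one_le_right
      (Finset.prod_nonneg fun m _ => Finset.prod_nonneg fun i _ => hθ _ _) ?_
    have hsurj : Function.Surjective (f 0) := fun j => by
      by_contra! h
      have := hf j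
      simp [h] at this
    set σ := Equiv.ofBijective (f 0) (Finite.surjective_iff_bijective.1 hsurj)
    calc (1 : ℝ) = ∏ i, (if f 0 i = σ i then 1 else 0) := by simp [σ]
      _ ≤ _ := Finset.single_le_sum
        (f := fun σ : Equiv.Perm (Fin n) => ∏ i, (if f 0 i = σ i then (1 : ℝ) else 0))
        (fun σ _ => Finset.prod_nonneg fun i _ => by split_ifs <;> norm_num) (Finset.mem_univ σ)
  · exact le_rfl

theorem perm_nonneg {θ : Matrix (Fin n) (Fin n) ℝ} (hθ : ∀ i j, 0 ≤ θ i j) : 0 ≤ perm' θ :=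
  Finset.sum_nonneg fun _ _ => Finset.prod_nonneg fun _ _ => hθ _ _

theorem perm_pow_le_balancedSum {θ : Matrix (Fin n) (Fin n) ℝ} (hθ : ∀ i j, 0 ≤ θ i j) (M : ℕ) :
    perm' θ ^ M ≤ balancedSum θ M := by
  induction M with
  | zero => rw [pow_zero, balancedSum_zero]
  | succ M ih =>
    rw [pow_succ']
    exact (mul_le_mul_of_nonneg_left ih (perm_nonneg hθ)).trans (perm_mul_balancedSum_le hθ M)

theorem balancedSum_le_perm_pow (hn : 0 < n) {θ : Matrix (Fin n) (Fin n) ℝ}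
    (hθ : ∀ i j, 0 ≤ θ i j) (M : ℕ) :
    ((n.factorial : ℝ) / (n : ℝ) ^ n) ^ M * balancedSum θ (M + 1) ≤ perm' θ ^ (M + 1) := by
  induction M with
  | zero => simpa using balancedSum_one_le hθ
  | succ M ih =>
    calc ((n.factorial : ℝ) / (n : ℝ) ^ n) ^ (M + 1) * balancedSum θ (M + 1 + 1)
        = ((n.factorial : ℝ) / (n : ℝ) ^ n) ^ M *
          ((n.factorial : ℝ) / (n : ℝ) ^ n * balancedSum θ (M + 1 + 1)) := by ring
      _ ≤ ((n.factorial : ℝ) / (n : ℝ) ^ n) ^ M * (perm' θ * balancedSum θ (M + 1)) :=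
        mul_le_mul_of_nonneg_left (balancedSum_succ_le hn hθ _) (by positivity)
      _ = perm' θ * (((n.factorial : ℝ) / (n : ℝ) ^ n) ^ M * balancedSum θ (M + 1)) := by ring
      _ ≤ perm' θ * perm' θ ^ (M + 1) := mul_le_mul_of_nonneg_left ih (perm_nonneg hθ)
      _ = _ := (pow_succ' _ _).symm

end Balanced

/-- The number of permutations `τ` with `F ∘ τ = g`, if `F` and `g` have fibers of equal sizes. -/
theorem card_perm_comp_eq {α γ : Type*} [Fintype α] [DecidableEq α] [Fintype γ] [DecidableEq γ]
    {F g : α → γ}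
    (h : ∀ c, Fintype.card {a // g a = c} = Fintype.card {a // F a = c}) :
    Fintype.card {τ : Equiv.Perm α // F ∘ τ = g} =
      ∏ c, (Fintype.card {a // F a = c}).factorial := by
  rw [← DomMulAct.stabilizer_card F]
  set τ₀ : Equiv.Perm α := Equiv.ofFiberEquiv fun c => Fintype.equivOfCardEq (h c)
  have hτ₀ : F ∘ τ₀ = g := funext fun a => Equiv.ofFiberEquiv_map _ a
  refine (Fintype.card_congr ((Equiv.mulRight τ₀).subtypeEquiv fun ρ => ?_)).symm
  rw [Equiv.coe_mulRight, Equiv.Perm.coe_mul, ← Function.comp_assoc, ← hτ₀]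
  exact (Equiv.surjective τ₀).injective_comp_right.eq_iff.symm

section Kronecker

variable {n M : ℕ}

theorem card_fst_fiber (j : Fin n) : Fintype.card {p : Fin n × Fin M // p.1 = j} = M := by
  rw [Fintype.card_subtype]
  have : (Finset.univ.filter fun p : Fin n × Fin M => p.1 = j) = {j} ×ˢ Finset.univ := by
    ext p
    simp only [Finset.mem_filter, Finset.mem_product, Finset.mem_singleton, Finset.mem_univ,
      true_and, and_true]
  simp [this]

theorem card_fiber_uncurry (f : Fin M → Fin n → Fin n) (j : Fin n) :
    Fintype.card {p : Fin n × Fin M // f p.2 p.1 = j} =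
      ∑ m, ∑ i, (if f m i = j then 1 else 0) := by
  rw [Fintype.card_subtype, Finset.card_filter, Fintype.sum_prod_type_right]

open Classical in
theorem card_perm_fst_comp_eq (f : Fin M → Fin n → Fin n) :
    (Fintype.card {τ : Equiv.Perm (Fin n × Fin M) // Prod.fst ∘ τ = fun p => f p.2 p.1}) =
      if IsBalanced f then M.factorial ^ n else 0 := by
  split_ifs with hf
  · rw [card_perm_comp_eq fun c => by rw [card_fiber_uncurry, hf c, card_fst_fiber]]
    simp [card_fst_fiber]
  · rw [Fintype.card_eq_zero_iff, isEmpty_subtype]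
    intro τ hτ
    refine hf fun j => ?_
    rw [← card_fiber_uncurry]
    refine Eq.trans (Fintype.card_congr (τ.subtypeEquiv fun p => ?_)) (card_fst_fiber (M := M) j)
    rw [← congrFun hτ p, Function.comp_apply]

theorem perm_kronecker (θ : Matrix (Fin n) (Fin n) ℝ) (u : ℝ) :
    perm' (Matrix.kroneckerMap (· * ·) θ (Matrix.of fun _ _ : Fin M => u)) =
      u ^ (n * M) * ((M.factorial : ℝ) ^ n * balancedSum θ M) := by
  classical
  set E : (Fin M → Fin n → Fin n) ≃ (Fin n × Fin M → Fin n) :=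
    { toFun := fun f p => f p.2 p.1
      invFun := fun g m i => g (i, m)
      left_inv := fun f => rfl
      right_inv := fun g => rfl } with hE
  have h1 : perm' (Matrix.kroneckerMap (· * ·) θ (Matrix.of fun _ _ : Fin M => u)) =
      u ^ (n * M) * ∑ τ : Equiv.Perm (Fin n × Fin M), ∏ p : Fin n × Fin M, θ p.1 (τ p).1 := by
    rw [perm', Finset.mul_sum]
    refine Finset.sum_congr rfl fun τ _ => ?_
    simp [Matrix.kroneckerMap_apply, Finset.prod_mul_distrib, mul_comm]
  rw [h1, ← Finset.sum_fiberwise Finset.univ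
    (fun τ : Equiv.Perm (Fin n × Fin M) => (Prod.fst ∘ τ : Fin n × Fin M → Fin n)),
    ← E.sum_comp, balancedSum, Finset.mul_sum (a := (M.factorial : ℝ) ^ n)]
  congr 1
  refine Finset.sum_congr rfl fun f _ => ?_
  have h2 : ∀ τ ∈ Finset.univ.filter
      fun τ : Equiv.Perm (Fin n × Fin M) => (Prod.fst ∘ τ : Fin n × Fin M → Fin n) = E f,
      ∏ p : Fin n × Fin M, θ p.1 (τ p).1 = ∏ m, ∏ i, θ i (f m i) := fun τ hτ => by
    have hτ' := (Finset.mem_filter.1 hτ).2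
    rw [← Fintype.prod_prod_type_right (f := fun p : Fin n × Fin M => θ p.1 (f p.2 p.1))]
    refine Finset.prod_congr rfl fun p _ => ?_
    rw [show (τ p).1 = f p.2 p.1 from congrFun hτ' p]
  rw [Finset.sum_congr rfl h2, Finset.sum_const, ← Fintype.card_subtype, nsmul_eq_mul]
  have h3 := card_perm_fst_comp_eq f
  rw [show (fun p : Fin n × Fin M => f p.2 p.1) = E f from rfl] at h3
  rw [h3]
  split_ifs <;> simp

end Kronecker

/-- Passing to `M`-th roots in a two-sided comparison of `p ^ M` with `q`. -/
theorem root_bounds {n M : ℕ} (hM : 0 < M) {c p q : ℝ} (hc : 0 ≤ c) (hp : 0 ≤ p) (hq : 0 < q)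
    (h1 : ((M : ℝ) ^ M / (M.factorial : ℝ)) ^ n * c ^ (M - 1) * q ≤ p ^ M)
    (h2 : p ^ M ≤ ((M : ℝ) ^ M / (M.factorial : ℝ)) ^ n * q) :
    (M : ℝ) ^ n / (M.factorial : ℝ) ^ ((n : ℝ) / (M : ℝ)) * c ^ (((M : ℝ) - 1) / (M : ℝ)) ≤
        p / q ^ (1 / (M : ℝ)) ∧
      p / q ^ (1 / (M : ℝ)) ≤ (M : ℝ) ^ n / (M.factorial : ℝ) ^ ((n : ℝ) / (M : ℝ)) := by
  have hM' : (0 : ℝ) < M := by exact_mod_cast hM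
  have hf : (0 : ℝ) < M.factorial := by exact_mod_cast M.factorial_pos
  have e1 : ((M : ℝ) ^ n / (M.factorial : ℝ) ^ ((n : ℝ) / (M : ℝ))) ^ M =
      ((M : ℝ) ^ M / (M.factorial : ℝ)) ^ n := by
    rw [div_pow, div_pow, ← pow_mul, ← pow_mul, mul_comm n M,
      ← Real.rpow_mul_natCast hf.le, div_mul_cancel₀ _ hM'.ne', Real.rpow_natCast]
  have e2 : (c ^ (((M : ℝ) - 1) / (M : ℝ))) ^ M = c ^ (M - 1) := by
    rw [← Real.rpow_mul_natCast hc, div_mul_cancel₀ _ hM'.ne', ← Real.rpow_natCast,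
      Nat.cast_sub hM, Nat.cast_one]
  have e3 : (q ^ (1 / (M : ℝ))) ^ M = q := by
    rw [← Real.rpow_mul_natCast hq.le, one_div_mul_cancel hM'.ne', Real.rpow_one]
  have hqr : 0 < q ^ (1 / (M : ℝ)) := Real.rpow_pos_of_pos hq _
  constructor
  · rw [le_div_iff₀ hqr]
    refine le_of_pow_le_pow_left₀ hM.ne' hp ?_
    rwa [mul_pow, mul_pow, e1, e2, e3]
  · rw [div_le_iff₀ hqr]
    refine le_of_pow_le_pow_left₀ hM.ne' (by positivity) ?_
    rwa [mul_pow, e1, e3]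

/-- For `n, M ≥ 1` and a nonnegative `n×n` matrix `θ` with
`∏_i θ(i,σ(i)) > 0` for at least one permutation `σ`:
`(M^M/M!)^n · (n!/n^n)^{M−1} · perm(θ ⊗ U_{M,M}) ≤ perm(θ)^M ≤ (M^M/M!)^n · perm(θ ⊗ U_{M,M})`;
equivalently, the degree-`M` scaled Sinkhorn permanent
`perm_{scS,M}(θ) = perm(θ ⊗ U_{M,M})^{1/M}` satisfies
`(M^n/(M!)^{n/M})·(n!/n^n)^{(M−1)/M} ≤ perm(θ)/perm_{scS,M}(θ) ≤ M^n/(M!)^{n/M}`. -/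
theorem statement_6 (n M : ℕ) (hn : 1 ≤ n) (hM : 1 ≤ M)
    (θ : Matrix (Fin n) (Fin n) ℝ) (hθ : ∀ i j, 0 ≤ θ i j)
    (hex : ∃ σ : Equiv.Perm (Fin n), 0 < ∏ i, θ i (σ i)) :
    (((M : ℝ) ^ M / (M.factorial : ℝ)) ^ n * ((n.factorial : ℝ) / (n : ℝ) ^ n) ^ (M - 1) *
        perm' (Matrix.kroneckerMap (· * ·) θ (Matrix.of fun _ _ : Fin M => 1 / (M : ℝ))) ≤
          perm' θ ^ M ∧
      perm' θ ^ M ≤ ((M : ℝ) ^ M / (M.factorial : ℝ)) ^ n *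
        perm' (Matrix.kroneckerMap (· * ·) θ (Matrix.of fun _ _ : Fin M => 1 / (M : ℝ)))) ∧
    ((M : ℝ) ^ n / (M.factorial : ℝ) ^ ((n : ℝ) / (M : ℝ)) *
        ((n.factorial : ℝ) / (n : ℝ) ^ n) ^ (((M : ℝ) - 1) / (M : ℝ)) ≤
          perm' θ /
            (perm' (Matrix.kroneckerMap (· * ·) θ
              (Matrix.of fun _ _ : Fin M => 1 / (M : ℝ)))) ^ (1 / (M : ℝ)) ∧
      perm' θ /
          (perm' (Matrix.kroneckerMap (· * ·) θ
            (Matrix.of fun _ _ : Fin M => 1 / (M : ℝ)))) ^ (1 / (M : ℝ)) ≤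
        (M : ℝ) ^ n / (M.factorial : ℝ) ^ ((n : ℝ) / (M : ℝ))) := by
  have hpos : 0 < perm' θ := by
    obtain ⟨σ, hσ⟩ := hex
    exact hσ.trans_le (Finset.single_le_sum (f := fun σ : Equiv.Perm (Fin n) => ∏ i, θ i (σ i))
      (fun τ _ => Finset.prod_nonneg fun i _ => hθ i (τ i)) (Finset.mem_univ σ))
  set q := perm' (Matrix.kroneckerMap (· * ·) θ (Matrix.of fun _ _ : Fin M => 1 / (M : ℝ)))
    with hq
  have hbal : ((M : ℝ) ^ M / (M.factorial : ℝ)) ^ n * q = balancedSum θ M := by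
    rw [hq, perm_kronecker, div_pow, one_div, inv_pow, ← pow_mul, mul_comm M n]
    field_simp
  have hupper : perm' θ ^ M ≤ ((M : ℝ) ^ M / (M.factorial : ℝ)) ^ n * q :=
    hbal ▸ perm_pow_le_balancedSum hθ M
  have hlower : ((M : ℝ) ^ M / (M.factorial : ℝ)) ^ n *
      ((n.factorial : ℝ) / (n : ℝ) ^ n) ^ (M - 1) * q ≤ perm' θ ^ M := by
    have h := balancedSum_le_perm_pow hn hθ (M - 1)
    rw [Nat.sub_add_cancel hM, ← hbal] at h
    linarith
  have hqpos : 0 < q :=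
    pos_of_mul_pos_right ((pow_pos hpos M).trans_le hupper) (by positivity)
  exact ⟨⟨hlower, hupper⟩, root_bounds hM (by positivity) hpos.le hqpos hlower hupper⟩
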